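/- arXiv:2303.04125 — 5 statements merged into one kernel-verified Lean document; each statement's English description precedes it below -/
import Mathlib

section
/- Let λ be an infinite cardinal and let S be a family of subsets of λ with |S| > ded λ. Then for every natural number n there exist ordinals α_0 < α_1 < … < α_{n-1} < λ such that S shatters the set {α_0,…,α_{n-1}}: for every subset w ⊆ {0,…,n-1} there is a set D ∈ S such that for all j < n, α_j ∈ D if and only if j ∈ w. -/
open Cardinal

/-- `B` is a branch of length `μ` of the tree `(T, r)`: a downward-closed set that is
enumerated, in increasing `r`-order, by a function from (the canonical type of order
type) `μ`. -/
def IsBranchOfLength {T : Type} (r : T → T → Prop) (μ : Cardinal.{0}) (B : Set T) : Prop :=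
  (∀ x ∈ B, ∀ y, r y x → y ∈ B) ∧
  ∃ f : μ.ord.ToType → T, (∀ i j, i < j → r (f i) (f j)) ∧ Set.range f = B

/-- `ded λ`: the supremum of the set of cardinals `κ` for which there exist a regular
cardinal `μ` and a tree (a strict order in which the set of predecessors of every node
is well-ordered) with at most `λ` nodes and `κ` branches of length `μ`. -/
noncomputable def ded (lam : Cardinal.{0}) : Cardinal.{0} :=
  sSup { k : Cardinal.{0} |
    ∃ μ : Cardinal.{0}, μ.IsRegular ∧
      ∃ (T : Type) (r : T → T → Prop),
        IsStrictOrder T r ∧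
        (∀ x : T, IsWellOrder {y // r y x} fun a b => r a.1 b.1) ∧
        Cardinal.mk T ≤ lam ∧
        k = Cardinal.mk {B : Set T // IsBranchOfLength r μ B} }

theorem le_ded_aux {lam : Cardinal.{0}} (hlam : ℵ₀ ≤ lam) {μ : Cardinal.{0}} (hμ : μ.IsRegular)
    (T : Type) (r : T → T → Prop) (h1 : IsStrictOrder T r)
    (h2 : ∀ x : T, IsWellOrder {y // r y x} fun a b => r a.1 b.1) (h3 : #T ≤ lam) :
    #{B : Set T // IsBranchOfLength r μ B} ≤ ded lam := by
  unfold ded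
  refine le_csSup ⟨2 ^ lam, ?_⟩ ⟨μ, hμ, T, r, h1, h2, h3, rfl⟩
  rintro k ⟨μ', -, T', r', -, -, h3', rfl⟩
  refine (mk_subtype_le _).trans ?_
  rw [mk_set]
  exact power_le_power_left two_ne_zero h3'

/-- Disjoint union of `λ` chains of type `ω`. -/
theorem lam_le_ded {lam : Cardinal.{0}} (hlam : ℵ₀ ≤ lam) : lam ≤ ded lam := by
  let X := lam.ord.ToType
  let N := (ℵ₀ : Cardinal.{0}).ord.ToType
  let r : X × N → X × N → Prop := fun a b => a.1 = b.1 ∧ a.2 < b.2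
  have hN : #N = ℵ₀ := mk_ord_toType _
  have hX : #X = lam := mk_ord_toType _
  have hne : Nonempty N := by
    rw [← mk_ne_zero_iff, hN]; exact aleph0_ne_zero
  have key := le_ded_aux hlam isRegular_aleph0 (X × N) r
    { irrefl := fun a h => lt_irrefl _ h.2
      trans := fun a b c h h' => ⟨h.1.trans h'.1, h.2.trans h'.2⟩ }
    (fun x =>
      { trichotomous := by
          rintro ⟨a, ha⟩ ⟨b, hb⟩ hab hba
          apply Subtype.ext
          have h1 : a.1 = b.1 := ha.1.trans hb.1.symm
          refine Prod.ext h1 (le_antisymm (not_lt.1 fun h => hba ⟨h1.symm, h⟩)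
            (not_lt.1 fun h => hab ⟨h1, h⟩))
        wf := Subrelation.wf (r := InvImage (· < ·) (fun a : {y // r y x} => a.1.2))
          (fun h => h.2) (InvImage.wf _ wellFounded_lt) })
    (by simp [hN, hX, hlam])
  refine le_trans ?_ key
  rw [← hX]
  refine mk_le_of_injective (f := fun x => ⟨Set.range fun i : N => (x, i), ?_, fun i => (x, i),
    fun i j h => ⟨rfl, h⟩, rfl⟩) ?_
  · rintro _ ⟨i, rfl⟩ ⟨y, j⟩ ⟨h, -⟩
    exact ⟨j, by simp at h; simp [h]⟩
  · intro x y hxy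
    obtain ⟨i⟩ := hne
    have h : (x, i) ∈ Set.range fun i : N => (y, i) := by
      have h0 := congrArg Subtype.val hxy
      simp only at h0
      rw [← h0]; exact ⟨i, rfl⟩
    obtain ⟨j, hj⟩ := h
    exact (Prod.ext_iff.1 hj).1.symm

theorem mk_iUnion_le_aux {α ι : Type} {κ : Cardinal.{0}} (hκ : ℵ₀ ≤ κ) (f : ι → Set α)
    (hι : #ι ≤ κ) (hf : ∀ i, #(f i) ≤ κ) : #(⋃ i, f i) ≤ κ := by
  refine (mk_iUnion_le_sum_mk).trans ((sum_le_sum _ (fun _ => κ) hf).trans ?_)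
  rw [sum_const']
  exact mul_le_of_le hκ hι le_rfl

/-- Paths of a tree with at most `λ` nodes through an initial segment. -/
theorem paths_le {lam : Cardinal.{0}} (hlam : ℵ₀ ≤ lam) {X : Type} [LinearOrder X]
    [WellFoundedLT X] (F : Set (X × Set X)) (hF : #F ≤ lam) (I : Set X) (hI : IsLowerSet I) :
    #{s : Set X | s ⊆ I ∧ ∀ b ∈ I, (b, s ∩ Set.Iio b) ∈ F} ≤ ded lam := by
  have hd := lam_le_ded hlam
  by_cases hmax : ∃ m ∈ I, ∀ x ∈ I, x ≤ m
  · obtain ⟨m, hm, hmI⟩ := hmax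
    have : #{s : Set X | s ⊆ I ∧ ∀ b ∈ I, (b, s ∩ Set.Iio b) ∈ F} ≤ #(F × Prop) := by
      refine mk_le_of_injective (f := fun s => (⟨_, s.2.2 m hm⟩, m ∈ s.1)) ?_
      rintro ⟨s, hs⟩ ⟨t, ht⟩ h
      simp only [Prod.mk.injEq, Subtype.mk.injEq, true_and, eq_iff_iff] at h
      apply Subtype.ext
      ext x
      show x ∈ s ↔ x ∈ t
      by_cases hx : x ∈ I
      · rcases (hmI x hx).lt_or_eq with h' | rfl
        · have := Set.ext_iff.1 h.1 x
          simpa [h'] using this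
        · exact h.2
      · exact ⟨fun h => (hx (hs.1 h)).elim, fun h => (hx (ht.1 h)).elim⟩
    refine this.trans (le_trans ?_ hd)
    rw [mk_prod]
    simp only [lift_id]
    refine mul_le_of_le hlam hF (le_trans ?_ hlam)
    exact (lt_aleph0_of_finite Prop).le
  by_cases hemp : I.Nonempty
  swap
  · rw [Set.not_nonempty_iff_eq_empty] at hemp
    subst hemp
    refine le_trans ?_ (one_le_aleph0.trans (hlam.trans hd))
    rw [le_one_iff_subsingleton]
    refine ⟨fun s t => Subtype.ext ?_⟩
    rw [Set.subset_empty_iff.1 s.2.1, Set.subset_empty_iff.1 t.2.1]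
  push Not at hmax
  have : Nonempty I := hemp.to_subtype
  have : NoMaxOrder I := ⟨fun a => by
    obtain ⟨x, hx, h⟩ := hmax a a.2
    exact ⟨⟨x, hx⟩, h⟩⟩
  obtain ⟨C, hC, hCt⟩ := Ordinal.exists_ord_cof_eq I
  set μ := Order.cof I with hμdef
  have hμ : μ.IsRegular := ⟨Order.aleph0_le_cof, by rw [Order.cof_ord_cof]⟩
  obtain ⟨e⟩ : Nonempty (μ.ord.ToType ≃o C) := by
    have : Ordinal.type (α := C) (· < ·) = Ordinal.type (α := μ.ord.ToType) (· < ·) := by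
      rw [hCt, Ordinal.type_toType]
    obtain ⟨g⟩ := Ordinal.type_eq.1 this
    exact ⟨(OrderIso.ofRelIsoLT g).symm⟩
  let g : μ.ord.ToType → X := fun i => (e i).1.1
  have hg : ∀ i j, i < j → g i < g j := fun i j h => e.strictMono h
  have hgI : ∀ i, g i ∈ I := fun i => (e i).1.2
  have hgc : ∀ x ∈ I, ∃ i, x < g i := by
    intro x hx
    obtain ⟨y, hy, hxy⟩ := hmax x hx
    · obtain ⟨c, hc, hle⟩ := hC ⟨y, hy⟩
      refine ⟨e.symm ⟨c, hc⟩, lt_of_lt_of_le hxy ?_⟩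
      have hle' : y ≤ c.1 := hle
      simpa [g] using hle'
  let T := {p : X × Set X // p ∈ F ∧ p.1 ∈ Set.range g}
  let r : T → T → Prop := fun a b => a.1.1 < b.1.1 ∧ a.1.2 = b.1.2 ∩ Set.Iio a.1.1
  have key := le_ded_aux hlam hμ T r
    { irrefl := fun a h => lt_irrefl _ h.1
      trans := by
        intro a b c h h'
        refine ⟨h.1.trans h'.1, ?_⟩
        rw [h.2, h'.2, Set.inter_assoc, Set.Iio_inter_Iio, min_eq_right h.1.le] }
    (fun x =>
      { trichotomous := by
          rintro ⟨a, ha⟩ ⟨b, hb⟩ hab hba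
          apply Subtype.ext
          apply Subtype.ext
          rcases lt_trichotomy a.1.1 b.1.1 with h | h | h
          · refine (hab ⟨h, ?_⟩).elim
            rw [ha.2, hb.2, Set.inter_assoc, Set.Iio_inter_Iio, min_eq_right h.le]
          · refine Prod.ext h ?_
            rw [ha.2, hb.2, h]
          · refine (hba ⟨h, ?_⟩).elim
            rw [ha.2, hb.2, Set.inter_assoc, Set.Iio_inter_Iio, min_eq_right h.le]
        wf := Subrelation.wf (r := InvImage (· < ·) (fun a : {y // r y x} => a.1.1.1))
          (fun h => h.1) (InvImage.wf _ wellFounded_lt) })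
    ((mk_le_of_injective (f := fun t : T => (⟨t.1, t.2.1⟩ : F))
      (fun a b h => Subtype.ext (Subtype.mk.inj h))).trans hF)
  refine le_trans ?_ key
  let br : {s : Set X | s ⊆ I ∧ ∀ b ∈ I, (b, s ∩ Set.Iio b) ∈ F} → μ.ord.ToType → T :=
    fun s i => ⟨(g i, s.1 ∩ Set.Iio (g i)), s.2.2 _ (hgI i), i, rfl⟩
  refine mk_le_of_injective (f := fun s => ⟨Set.range (br s), ?_, br s, ?_, rfl⟩) ?_
  · rintro _ ⟨i, rfl⟩ y hy
    obtain ⟨j, hj⟩ := y.2.2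
    refine ⟨j, Subtype.ext (Prod.ext hj ?_)⟩
    have h1 : y.1.1 < g i := hy.1
    have h2 : y.1.2 = (s.1 ∩ Set.Iio (g i)) ∩ Set.Iio y.1.1 := hy.2
    show s.1 ∩ Set.Iio (g j) = y.1.2
    rw [h2, Set.inter_assoc, Set.Iio_inter_Iio, min_eq_right h1.le, hj]
  · intro i j h
    refine ⟨hg i j h, ?_⟩
    show s.1 ∩ Set.Iio (g i) = s.1 ∩ Set.Iio (g j) ∩ Set.Iio (g i)
    rw [Set.inter_assoc, Set.Iio_inter_Iio, min_eq_right (hg i j h).le]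
  · intro s t hst
    have h0 : Set.range (br s) = Set.range (br t) := congrArg Subtype.val hst
    have h1 : ∀ i, s.1 ∩ Set.Iio (g i) = t.1 ∩ Set.Iio (g i) := by
      intro i
      have : br s i ∈ Set.range (br t) := h0 ▸ ⟨i, rfl⟩
      obtain ⟨j, hj⟩ := this
      have hj' := congrArg Subtype.val hj
      have hj1 : g j = g i := congrArg Prod.fst hj'
      have hj2 : t.1 ∩ Set.Iio (g j) = s.1 ∩ Set.Iio (g i) := congrArg Prod.snd hj'
      rw [← hj2, hj1]
    apply Subtype.ext
    ext x
    by_cases hx : x ∈ I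
    · obtain ⟨i, hi⟩ := hgc x hx
      have := Set.ext_iff.1 (h1 i) x
      simpa [hi] using this
    · exact ⟨fun h => (hx (s.2.1 h)).elim, fun h => (hx (t.2.1 h)).elim⟩

/-- There are more than `λ` fat nodes. -/
theorem fat_lt {lam : Cardinal.{0}} (hlam : ℵ₀ ≤ lam) {X : Type} [LinearOrder X]
    [WellFoundedLT X] (hX : #X ≤ lam) (S : Set (Set X)) (hS : ded lam < #S) :
    lam < #{p : X × Set X | ded lam < #{D : Set X | D ∈ S ∧ D ∩ Set.Iio p.1 = p.2}} := by
  by_contra hcon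
  rw [not_lt] at hcon
  set F := {p : X × Set X | ded lam < #{D : Set X | D ∈ S ∧ D ∩ Set.Iio p.1 = p.2}} with hFdef
  have hd := lam_le_ded hlam
  have hd0 := hlam.trans hd
  refine absurd hS (not_lt.2 ?_)
  let P : Set X → Set (Set X) := fun I => {s | s ⊆ I ∧ ∀ b ∈ I, (b, s ∩ Set.Iio b) ∈ F}
  have hP : ∀ I, IsLowerSet I → #(P I) ≤ ded lam := fun I hI => paths_le hlam F hcon I hI
  let B : X → Set (Set X) := fun b => ⋃ s : P (Set.Iio b),
    {D | (D ∈ S ∧ D ∩ Set.Iio b = s.1) ∧ (b, s.1) ∉ F}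
  have hB : ∀ b, #(B b) ≤ ded lam := by
    intro b
    refine mk_iUnion_le_aux hd0 _ (hP _ (isLowerSet_Iio b)) fun s => ?_
    by_cases h : (b, s.1) ∈ F
    · simp [h]
    · simp only [h, not_false_eq_true, and_true]
      exact not_lt.1 h
  have hsub : S ⊆ P Set.univ ∪ ⋃ b, B b := by
    intro D hD
    by_cases h : ∀ b, (b, D ∩ Set.Iio b) ∈ F
    · exact Or.inl ⟨Set.subset_univ _, fun b _ => h b⟩
    · right
      push Not at h
      obtain ⟨b, hb, hmin⟩ := WellFounded.has_min (wellFounded_lt (α := X))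
        {b | (b, D ∩ Set.Iio b) ∉ F} h
      refine Set.mem_iUnion.2 ⟨b, Set.mem_iUnion.2 ⟨⟨D ∩ Set.Iio b, Set.inter_subset_right, ?_⟩,
        ⟨hD, rfl⟩, hb⟩⟩
      intro c hc
      rw [Set.inter_assoc, Set.Iio_inter_Iio, min_eq_right (le_of_lt hc)]
      by_contra h'
      exact hmin c h' hc
  refine (mk_le_mk_of_subset hsub).trans ((mk_union_le _ _).trans ?_)
  exact add_le_of_le hd0 (hP _ isLowerSet_univ) (mk_iUnion_le_aux hd0 _ (hX.trans hd) hB)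

theorem shatter_aux {lam : Cardinal.{0}} (hlam : ℵ₀ ≤ lam) {X : Type} [LinearOrder X]
    [WellFoundedLT X] (hX : #X = lam) (n : ℕ) : ∀ (S : Set (Set X)), ded lam < #S →
    ∃ A : Finset X, A.card = n ∧ ∀ w : Set X, ∃ D ∈ S, ∀ x ∈ A, x ∈ D ↔ x ∈ w := by
  induction n with
  | zero =>
    intro S hS
    have : S.Nonempty := by
      rw [← Set.nonempty_coe_sort, ← mk_ne_zero_iff]
      exact (bot_le.trans_lt hS).ne'
    obtain ⟨D, hD⟩ := this
    exact ⟨∅, rfl, fun w => ⟨D, hD, by simp⟩⟩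
  | succ n ih =>
    intro S hS
    have hfat := fat_lt hlam hX.le S hS
    set F := {p : X × Set X | ded lam < #{D : Set X | D ∈ S ∧ D ∩ Set.Iio p.1 = p.2}} with hFdef
    have h1 : ∀ p : F, ∃ A : Finset X, A.card = n ∧ ∀ w : Set X,
        ∃ D ∈ {D : Set X | D ∈ S ∧ D ∩ Set.Iio p.1.1 = p.1.2}, ∀ x ∈ A, x ∈ D ↔ x ∈ w :=
      fun p => ih _ p.2
    choose A hA hA' using h1
    have hinf : Infinite X := by rw [infinite_iff, hX]; exact hlam
    have hni : ¬ Function.Injective (fun p : F => (p.1.1, A p)) := by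
      intro hinj
      have := mk_le_of_injective hinj
      rw [mk_prod, lift_id, lift_id, mk_finset_of_infinite, hX, mul_eq_self hlam] at this
      exact absurd hfat (not_lt.2 this)
    have hni' : ∃ p q : F, p.1.1 = q.1.1 ∧ A p = A q ∧ ∃ c, c ∈ p.1.2 ∧ c ∉ q.1.2 := by
      simp only [Function.Injective] at hni
      push Not at hni
      obtain ⟨p, q, hpq, hne⟩ := hni
      simp only [Prod.mk.injEq] at hpq
      have : p.1.2 ≠ q.1.2 := fun h => hne (Subtype.ext (Prod.ext hpq.1 h))
      by_cases h : p.1.2 ⊆ q.1.2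
      · have h2 : ¬ q.1.2 ⊆ p.1.2 := fun h2 => this (h.antisymm h2)
        exact ⟨q, p, hpq.1.symm, hpq.2.symm, Set.not_subset.1 h2⟩
      · exact ⟨p, q, hpq.1, hpq.2, Set.not_subset.1 h⟩
    obtain ⟨p, q, hpq, hApq, c, hcp, hcq⟩ := hni'
    have hclt : c < p.1.1 := by
      obtain ⟨D, hD, -⟩ := hA' p ∅
      have := hD.2 ▸ hcp
      exact this.2
    have hp : ∀ D, D ∩ Set.Iio p.1.1 = p.1.2 → c ∈ D := fun D hD => (hD ▸ hcp : c ∈ D ∩ _).1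
    have hq : ∀ D, D ∩ Set.Iio q.1.1 = q.1.2 → c ∉ D := fun D hD h =>
      hcq (hD ▸ ⟨h, hpq ▸ hclt⟩)
    have hcA : c ∉ A p := by
      intro h
      obtain ⟨D, hD, hDw⟩ := hA' p ∅
      exact (hDw c h).1 (hp D hD.2)
    refine ⟨insert c (A p), by rw [Finset.card_insert_of_notMem hcA, hA], fun w => ?_⟩
    by_cases hw : c ∈ w
    · obtain ⟨D, hD, hDw⟩ := hA' p w
      refine ⟨D, hD.1, fun x hx => ?_⟩
      rcases Finset.mem_insert.1 hx with rfl | hx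
      · exact ⟨fun _ => hw, fun _ => hp D hD.2⟩
      · exact hDw x hx
    · obtain ⟨D, hD, hDw⟩ := hA' q w
      refine ⟨D, hD.1, fun x hx => ?_⟩
      rcases Finset.mem_insert.1 hx with rfl | hx
      · exact ⟨fun h => (hq D hD.2 h).elim, fun h => (hw h).elim⟩
      · exact hDw x (hApq ▸ hx)

/-- If `S` is a family of subsets of `λ` with `|S| > ded λ`, then for every `n < ω`
there are ordinals `α_0 < … < α_{n-1} < λ` such that `S` shatters `{α_0, …, α_{n-1}}`. -/
theorem stmt0 (lam : Cardinal.{0}) (hlam : ℵ₀ ≤ lam)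
    (S : Set (Set lam.ord.ToType)) (hS : ded lam < Cardinal.mk ↥S) (n : ℕ) :
    ∃ a : Fin n → lam.ord.ToType, StrictMono a ∧
      ∀ w : Set (Fin n), ∃ D ∈ S, ∀ j : Fin n, a j ∈ D ↔ j ∈ w := by
  obtain ⟨A, hA, h⟩ := shatter_aux hlam (mk_ord_toType lam) n S hS
  refine ⟨A.orderEmbOfFin hA, (A.orderEmbOfFin hA).strictMono, fun w => ?_⟩
  obtain ⟨D, hD, hDw⟩ := h (A.orderEmbOfFin hA '' w)
  refine ⟨D, hD, fun j => (hDw _ (A.orderEmbOfFin_mem hA j)).trans ?_⟩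
  exact (A.orderEmbOfFin hA).injective.mem_set_image
end

section
/- Let λ be an infinite cardinal, S a family of subsets of λ, and α an ordinal with α < λ. If |{A ∩ α : A ∈ S}| ≥ (ded λ)⁺, then 2^{|α|} > λ. Consequently, if in addition κ is an infinite cardinal with λ ≥ ℶ₃(κ), then |α| > ℶ₂(κ). -/
open Cardinal

theorem le_ded (lam : Cardinal.{0}) (hlam : ℵ₀ ≤ lam) : lam ≤ ded lam := by
  have hbdd : BddAbove { k : Cardinal.{0} |
    ∃ μ : Cardinal.{0}, μ.IsRegular ∧
      ∃ (T : Type) (r : T → T → Prop),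
        IsStrictOrder T r ∧
        (∀ x : T, IsWellOrder {y // r y x} fun a b => r a.1 b.1) ∧
        Cardinal.mk T ≤ lam ∧
        k = Cardinal.mk {B : Set T // IsBranchOfLength r μ B} } := by
    refine ⟨2 ^ lam, ?_⟩
    rintro k ⟨μ, -, T, r, -, -, hT, rfl⟩
    refine (Cardinal.mk_subtype_le _).trans ?_
    rw [Cardinal.mk_set]
    exact Cardinal.power_le_power_left two_ne_zero hT
  let T := lam.out × ℕ
  let r : T → T → Prop := fun x y => x.1 = y.1 ∧ x.2 < y.2
  have key : lam ≤ Cardinal.mk {B : Set T // IsBranchOfLength r ℵ₀ B} := by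
    have hiso : Nonempty (((· < ·) : (ℵ₀ : Cardinal.{0}).ord.ToType → (ℵ₀ : Cardinal.{0}).ord.ToType → Prop) ≃r
        ((· < ·) : ℕ → ℕ → Prop)) := by
      rw [← Ordinal.type_eq, Ordinal.type_toType, Cardinal.ord_aleph0, Ordinal.type_nat_lt]
    obtain ⟨e⟩ := hiso
    have hb : ∀ i : lam.out, IsBranchOfLength r ℵ₀ {x : T | x.1 = i} := by
      intro i
      refine ⟨fun x hx y hy => hy.1.trans hx, fun n => (i, e n),
        fun m n hmn => ⟨rfl, e.map_rel_iff.2 hmn⟩, ?_⟩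
      ext ⟨j, n⟩
      constructor
      · rintro ⟨m, hm⟩
        exact (congrArg Prod.fst hm).symm
      · intro hj
        refine ⟨e.symm n, ?_⟩
        have hj' : j = i := hj
        simp [hj']
    have hinj : Function.Injective
        (fun i : lam.out => (⟨_, hb i⟩ : {B : Set T // IsBranchOfLength r ℵ₀ B})) := by
      intro i j hij
      have h1 : ({x : T | x.1 = i}) = {x : T | x.1 = j} := congrArg Subtype.val hij
      have h2 : ((i, 0) : T) ∈ {x : T | x.1 = i} := rfl
      rw [h1] at h2
      exact h2
    simpa using Cardinal.mk_le_of_injective hinj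
  refine key.trans (le_csSup hbdd ⟨ℵ₀, Cardinal.isRegular_aleph0, T, r, ?_, ?_, ?_, rfl⟩)
  · exact { irrefl := fun x hx => lt_irrefl _ hx.2
            trans := fun x y z h1 h2 => ⟨h1.1.trans h2.1, h1.2.trans h2.2⟩ }
  · intro x
    let g : (fun a b : {y // r y x} => r a.1 b.1) ↪r ((· < ·) : ℕ → ℕ → Prop) :=
      { toFun := fun y => y.1.2
        inj' := by
          rintro ⟨⟨y, n⟩, hy⟩ ⟨⟨z, m⟩, hz⟩ hyz
          have h1 : y = x.1 := hy.1
          have h2 : z = x.1 := hz.1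
          have h3 : n = m := hyz
          subst h1 h3
          subst h2
          rfl
        map_rel_iff' := by
          intro y z
          exact ⟨fun hh => ⟨y.2.1.trans z.2.1.symm, hh⟩, fun hh => hh.2⟩ }
    exact g.isWellOrder
  · have : Cardinal.mk T = lam * ℵ₀ := by simp [T]
    rw [this, Cardinal.mul_aleph0_eq hlam]

/-- If `S` is a family of subsets of `λ`, `α < λ` (represented by the element `a` of the
canonical type of `λ`, whose set of predecessors `Set.Iio a` has cardinality `|α|`), and
the family of traces `{A ∩ α : A ∈ S}` has cardinality at least `(ded λ)⁺`, then
`2^{|α|} > λ`; consequently, for any infinite `κ` with `λ ≥ ℶ₃(κ)` we get `|α| > ℶ₂(κ)`. -/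
theorem stmt1 (lam : Cardinal.{0}) (hlam : ℵ₀ ≤ lam)
    (S : Set (Set lam.ord.ToType)) (a : lam.ord.ToType)
    (h : Order.succ (ded lam) ≤
      Cardinal.mk ↥{A : Set lam.ord.ToType | ∃ B ∈ S, A = B ∩ Set.Iio a}) :
    lam < (2:Cardinal.{0}) ^ Cardinal.mk ↥(Set.Iio a) ∧
      ∀ κ : Cardinal.{0}, ℵ₀ ≤ κ → ((2:Cardinal.{0}) ^ ((2:Cardinal.{0}) ^ ((2:Cardinal.{0}) ^ κ))) ≤ lam →
        ((2:Cardinal.{0}) ^ ((2:Cardinal.{0}) ^ κ)) < Cardinal.mk ↥(Set.Iio a) := by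
  have hle : Cardinal.mk ↥{A : Set lam.ord.ToType | ∃ B ∈ S, A = B ∩ Set.Iio a} ≤
      (2:Cardinal.{0}) ^ Cardinal.mk ↥(Set.Iio a) := by
    rw [← Cardinal.mk_powerset]
    refine Cardinal.mk_le_mk_of_subset ?_
    rintro A ⟨B, -, rfl⟩
    exact Set.inter_subset_right
  have hmain : lam < (2:Cardinal.{0}) ^ Cardinal.mk ↥(Set.Iio a) :=
    ((le_ded lam hlam).trans_lt (Order.lt_succ (ded lam))).trans_le (h.trans hle)
  refine ⟨hmain, fun κ _ hκ => ?_⟩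
  by_contra hcon
  exact absurd hmain (not_lt.2
    ((Cardinal.power_le_power_left two_ne_zero (not_lt.1 hcon)).trans hκ))
end

section
/- Let λ < μ be infinite cardinals with μ regular, and let S be a family of subsets of λ such that for every ordinal α < λ, |{A ∩ α : A ∈ S}| < μ. Define S¹ := {A ∈ S : for every α < λ, |{B ∈ S : B ∩ α = A ∩ α}| ≥ μ}. Then |S \ S¹| < μ. -/
open Cardinal

/-- Let `λ < μ` be infinite cardinals with `μ` regular, and `S` a family of subsets of `λ`
(whose elements are represented as subsets of the canonical type of `λ`, with `A ∩ α`
rendered as `A ∩ Set.Iio a`).  Assume that for every `α < λ` the family of traces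
`{A ∩ α : A ∈ S}` has cardinality `< μ`.  Then the family of non-fat members of `S`,
i.e. `S \ S¹` where `S¹ = {A ∈ S : ∀ α < λ, |{B ∈ S : B ∩ α = A ∩ α}| ≥ μ}`,
has cardinality `< μ`. -/
theorem stmt2 (lam μ : Cardinal.{0}) (hlam : ℵ₀ ≤ lam) (hlm : lam < μ) (hμ : μ.IsRegular)
    (S : Set (Set lam.ord.ToType))
    (htrace : ∀ a : lam.ord.ToType,
      Cardinal.mk ↥{A : Set lam.ord.ToType | ∃ B ∈ S, A = B ∩ Set.Iio a} < μ) :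
    Cardinal.mk ↥(S \ {A ∈ S | ∀ a : lam.ord.ToType,
      μ ≤ Cardinal.mk ↥{B ∈ S | B ∩ Set.Iio a = A ∩ Set.Iio a}}) < μ := by
  let U : (a : lam.ord.ToType) →
      {A : Set lam.ord.ToType | ∃ B ∈ S, A = B ∩ Set.Iio a} → Set (Set lam.ord.ToType) :=
    fun a T => {A | A ∈ S ∧ A ∩ Set.Iio a = T.1 ∧
      Cardinal.mk ↥{B ∈ S | B ∩ Set.Iio a = T.1} < μ}
  have hU : ∀ a T, Cardinal.mk (U a T) < μ := by
    intro a T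
    by_cases h : Cardinal.mk ↥{B ∈ S | B ∩ Set.Iio a = T.1} < μ
    · refine lt_of_le_of_lt (Cardinal.mk_le_mk_of_subset ?_) h
      rintro A ⟨h1, h2, -⟩
      exact ⟨h1, h2⟩
    · have : U a T = ∅ := by
        ext A
        simp only [Set.mem_empty_iff_false, iff_false]
        rintro ⟨-, -, h3⟩
        exact h h3
      rw [this, Cardinal.mk_emptyCollection]
      exact hμ.pos
  have hV : Cardinal.mk ↥(⋃ a, ⋃ T, U a T) < μ := by
    rw [Cardinal.card_iUnion_lt_iff_forall_of_isRegular hμ (by rwa [Cardinal.mk_ord_toType])]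
    intro a
    rw [Cardinal.card_iUnion_lt_iff_forall_of_isRegular hμ (htrace a)]
    exact hU a
  refine lt_of_le_of_lt (Cardinal.mk_le_mk_of_subset ?_) hV
  rintro A ⟨hA, hn⟩
  have : ∃ a : lam.ord.ToType,
      Cardinal.mk ↥{B ∈ S | B ∩ Set.Iio a = A ∩ Set.Iio a} < μ := by
    by_contra hc
    exact hn ⟨hA, fun a => not_lt.1 fun h => hc ⟨a, h⟩⟩
  obtain ⟨a, ha⟩ := this
  exact Set.mem_iUnion.2 ⟨a, Set.mem_iUnion.2 ⟨⟨A ∩ Set.Iio a, A, hA, rfl⟩, hA, rfl, ha⟩⟩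
end

section
/- Let λ < μ be infinite cardinals with μ regular, and let S be a family of subsets of λ such that for every ordinal α < λ, |{A ∩ α : A ∈ S}| < μ. Define S¹ := {A ∈ S : for every α < λ, |{B ∈ S : B ∩ α = A ∩ α}| ≥ μ}. Then for every A ∈ S¹ and every α < λ, |{B ∈ S¹ : B ∩ α = A ∩ α}| ≥ μ. -/
open Cardinal

/-- Let `λ < μ` be infinite cardinals with `μ` regular, and `S` a family of subsets of `λ`
(whose elements are represented as subsets of the canonical type of `λ`, with `A ∩ α`
rendered as `A ∩ Set.Iio a`).  Assume that for every `α < λ` the family of traces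
`{A ∩ α : A ∈ S}` has cardinality `< μ`.  Let
`S¹ = {A ∈ S : ∀ α < λ, |{B ∈ S : B ∩ α = A ∩ α}| ≥ μ}` be the family of fat members
of `S`.  Then for every `A ∈ S¹` and every `α < λ`,
`|{B ∈ S¹ : B ∩ α = A ∩ α}| ≥ μ`. -/
theorem stmt3 (lam μ : Cardinal.{0}) (hlam : ℵ₀ ≤ lam) (hlm : lam < μ) (hμ : μ.IsRegular)
    (S : Set (Set lam.ord.ToType))
    (htrace : ∀ a : lam.ord.ToType,
      Cardinal.mk ↥{A : Set lam.ord.ToType | ∃ B ∈ S, A = B ∩ Set.Iio a} < μ)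
    (S1 : Set (Set lam.ord.ToType))
    (hS1 : S1 = {A ∈ S | ∀ a : lam.ord.ToType,
      μ ≤ Cardinal.mk ↥{B ∈ S | B ∩ Set.Iio a = A ∩ Set.Iio a}}) :
    ∀ A ∈ S1, ∀ a : lam.ord.ToType,
      μ ≤ Cardinal.mk ↥{B ∈ S1 | B ∩ Set.Iio a = A ∩ Set.Iio a} := by
  have hbad : Cardinal.mk ↥(S \ S1) < μ := by
    have hsub : S \ S1 ⊆ ⋃ a : lam.ord.ToType,
        ⋃ T : ↥{A : Set lam.ord.ToType | ∃ B ∈ S, A = B ∩ Set.Iio a},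
          {B ∈ S | B ∩ Set.Iio a = T.1 ∧
            Cardinal.mk ↥{C ∈ S | C ∩ Set.Iio a = T.1} < μ} := by
      rintro B ⟨hB, hB1⟩
      rw [hS1] at hB1
      have h2 : ¬ ∀ a : lam.ord.ToType,
          μ ≤ Cardinal.mk ↥{C ∈ S | C ∩ Set.Iio a = B ∩ Set.Iio a} := fun h => hB1 ⟨hB, h⟩
      obtain ⟨a, ha⟩ := not_forall.1 h2
      exact Set.mem_iUnion.2 ⟨a, Set.mem_iUnion.2
        ⟨⟨B ∩ Set.Iio a, B, hB, rfl⟩, hB, rfl, not_le.1 ha⟩⟩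
    refine (Cardinal.mk_le_mk_of_subset hsub).trans_lt ?_
    refine (card_iUnion_lt_iff_forall_of_isRegular hμ (by simpa using hlm)).2 fun a => ?_
    refine (card_iUnion_lt_iff_forall_of_isRegular hμ (htrace a)).2 fun T => ?_
    by_cases hT : Cardinal.mk ↥{C ∈ S | C ∩ Set.Iio a = T.1} < μ
    · refine lt_of_le_of_lt (Cardinal.mk_le_mk_of_subset ?_) hT
      exact fun B hB => ⟨hB.1, hB.2.1⟩
    · have h0 : {B ∈ S | B ∩ Set.Iio a = T.1 ∧
            Cardinal.mk ↥{C ∈ S | C ∩ Set.Iio a = T.1} < μ} = ∅ :=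
        Set.eq_empty_of_forall_notMem fun B hB => hT hB.2.2
      rw [h0, Cardinal.mk_eq_zero]
      exact hμ.pos
  intro A hA a
  by_contra hlt
  rw [not_le] at hlt
  have hfat : μ ≤ Cardinal.mk ↥{B ∈ S | B ∩ Set.Iio a = A ∩ Set.Iio a} := by
    rw [hS1] at hA
    exact hA.2 a
  have hsub : {B ∈ S | B ∩ Set.Iio a = A ∩ Set.Iio a} ⊆
      {B ∈ S1 | B ∩ Set.Iio a = A ∩ Set.Iio a} ∪ (S \ S1) := by
    rintro B ⟨hB, hBa⟩
    by_cases h : B ∈ S1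
    · exact Or.inl ⟨h, hBa⟩
    · exact Or.inr ⟨hB, h⟩
  have h1 := (Cardinal.mk_le_mk_of_subset hsub).trans (Cardinal.mk_union_le _ _)
  exact absurd (hfat.trans h1) (not_le.2 (Cardinal.add_lt_of_lt hμ.aleph0_le hlt hbad))
end

section
/- Let L be a first-order language, T an L-theory with built-in Skolem functions, and Γ a set of L-types. Let α be an ordinal and (c_i)_{i<α} constant symbols not in L. For every finite subset S ⊆ α let p_S be a complete T-type in |S| variables, and let T* be a theory in the language L ∪ {c_i : i < α} such that: (1) T* extends T ∪ {p_S((c_γ)_{γ∈S}) : S ⊆ α finite} and T* is consistent; (2) every sentence of T* not among the sentences p_S((c_γ)_{γ∈S}) is an L-sentence (mentions none of the new constants); (3) each p_S is realized in some member of EC(T,Γ). Then there is a model N of T* that omits every type in Γ, i.e. N ∈ EC(T*,Γ). -/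
open FirstOrder FirstOrder.Language

/-- The structure `M` omits the type `p` (a set of `L`-formulas in `n` free variables):
no `n`-tuple of elements of `M` realizes every formula of `p`. -/
def OmitsIn (L : FirstOrder.Language.{0, 0}) (M : Type) [L.Structure M] {n : ℕ}
    (p : Set (L.Formula (Fin n))) : Prop :=
  ¬ ∃ v : Fin n → M, ∀ φ ∈ p, φ.Realize v

/-- `T` has built-in Skolem functions: for every formula `φ(x, y₀, …, y_{k-1})` there is a
term `t(y₀, …, y_{k-1})` such that `T ⊨ ∀ȳ (∃x φ(x, ȳ) → φ(t(ȳ), ȳ))`. -/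
def HasBuiltInSkolem (L : FirstOrder.Language.{0, 0}) (T : L.Theory) : Prop :=
  ∀ (k : ℕ) (φ : L.BoundedFormula (Fin k) 1), ∃ t : L.Term (Fin k),
    ∀ (M : Theory.ModelType.{0,0,0} T) (v : Fin k → M),
      (∃ x : M, φ.Realize v ![x]) → φ.Realize v ![t.realize v]

/-- `p` is a complete `T`-type in free variables `β`: it is consistent with `T`
(realized in some model of `T`) and maximal (decides every formula). -/
def IsCompleteTType (L : FirstOrder.Language.{0, 0}) (T : L.Theory) (β : Type)
    (p : Set (L.Formula β)) : Prop :=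
  (∃ (M : Theory.ModelType.{0,0,0} T) (v : β → M), ∀ φ ∈ p, φ.Realize v) ∧
    ∀ φ : L.Formula β, φ ∈ p ∨ φ.not ∈ p

/-- The `L[[ι]]`-sentence `φ((c_{g b})_{b ∈ β})` obtained from the `L`-formula `φ` by
substituting the new constant `c_{g b}` for the free variable `b`. -/
def constSentence (L : FirstOrder.Language.{0, 0}) (ι : Type) {β : Type}
    (φ : L.Formula β) (g : β → ι) : (L[[ι]]).Sentence :=
  ((L.lhomWithConstants ι).onFormula φ).subst fun b => Constants.term (L.con (g b))

theorem morley_realize_mem (L : FirstOrder.Language.{0, 0}) {M β : Type} [L.Structure M]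
    (A : L.Substructure M) (t : L.Term β) (v : β → M) (hv : ∀ b, v b ∈ A) :
    t.realize v ∈ A := by
  induction t with
  | var b => exact hv b
  | func f ts ih => exact A.fun_mem f _ ih

theorem morley_hull_elementary (L : FirstOrder.Language.{0, 0}) (T : L.Theory)
    (hSk : HasBuiltInSkolem L T) (M : Type) [L.Structure M] [Nonempty M] [M ⊨ T]
    (A : L.Substructure M) : A.IsElementary := by
  refine A.isElementary_of_exists fun n φ x a h => ?_
  let g : Empty ⊕ Fin (n + 1) → Fin n ⊕ Fin 1 :=
    Sum.elim Empty.elim (Fin.snoc (α := fun _ => Fin n ⊕ Fin 1) Sum.inl (Sum.inr 0))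
  let ψ : L.BoundedFormula (Fin n) 1 := BoundedFormula.relabel (n := 1) (k := 0) g φ.toFormula
  have key : ∀ b : M, ψ.Realize (((↑) : A → M) ∘ x) ![b] ↔
      φ.Realize default (Fin.snoc (α := fun _ => M) (((↑) : A → M) ∘ x) b) := by
    intro b
    refine (BoundedFormula.realize_relabel (m := 1) (n := 0)).trans ?_
    have := BoundedFormula.realize_toFormula φ
      (Sum.elim (((↑) : A → M) ∘ x) (![b] ∘ Fin.castAdd 0) ∘ g)
    rw [Formula.Realize] at this
    rw [Subsingleton.elim ((![b] : Fin 1 → M) ∘ Fin.natAdd 1 : Fin 0 → M) default, this]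
    refine iff_of_eq ?_
    congr 1
    · exact Subsingleton.elim _ _
    · funext i
      refine Fin.lastCases ?_ (fun j => ?_) i
      · simp [g]
      · simp [g]
  obtain ⟨t, ht⟩ := hSk n ψ
  have h1 := ht (Theory.ModelType.of T M) (((↑) : A → M) ∘ x) ⟨a, (key a).2 h⟩
  exact ⟨⟨t.realize (((↑) : A → M) ∘ x), morley_realize_mem L A t _ fun i => (x i).2⟩, (key _).1 h1⟩

theorem morley_hull_nonempty (L : FirstOrder.Language.{0, 0}) (T : L.Theory)
    (hSk : HasBuiltInSkolem L T) (M : Type) [L.Structure M]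
    (A : L.Substructure M) : Nonempty A := by
  obtain ⟨t, -⟩ := hSk 0 ⊤
  exact ⟨⟨t.realize (fun i : Fin 0 => i.elim0), morley_realize_mem L A t _ fun i => i.elim0⟩⟩

theorem morley_exists_term (L : FirstOrder.Language.{0, 0}) {ι M : Type} [L.Structure M]
    (c : ι → M) (x : M) (hx : x ∈ Substructure.closure L (Set.range c)) :
    ∃ t : L.Term ι, t.realize c = x := by
  obtain ⟨t, rfl⟩ := Substructure.mem_closure_iff_exists_term.1 hx
  refine ⟨t.relabel fun y => y.2.choose, ?_⟩
  rw [Term.realize_relabel]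
  congr 1
  funext y
  exact y.2.choose_spec

theorem morley_realize_constSentence (L : FirstOrder.Language.{0, 0}) (ι : Type) {β M : Type}
    [L.Structure M] [(L[[ι]]).Structure M] [(L.lhomWithConstants ι).IsExpansionOn M]
    (φ : L.Formula β) (g : β → ι) :
    M ⊨ constSentence L ι φ g ↔ φ.Realize fun b => ((L.con (g b) : (L[[ι]]).Constants) : M) := by
  unfold constSentence Sentence.Realize
  refine (BoundedFormula.realize_subst).trans ?_
  refine (LHom.realize_onFormula (L.lhomWithConstants ι) φ).trans ?_
  simp only [Term.realize_constants]

/-- Morley's method: `T` a theory with built-in Skolem functions, `Γ` a set of types,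
`(c_i)_{i<α}` new constants, `p_S` a complete `T`-type for each finite `S ⊆ α`, and `T*` a
consistent theory extending `T ∪ {p_S((c_γ)_{γ ∈ S}) : S ⊆ α finite}` all of whose other
sentences are `L`-sentences; if each `p_S` is realized in some member of `EC(T, Γ)`, then
some model of `T*` omits (the translation of) every type in `Γ`. -/
theorem stmt4 (L : FirstOrder.Language.{0, 0}) (T : L.Theory)
    (hSk : HasBuiltInSkolem L T)
    (Γ : Set (Σ n : ℕ, Set (L.Formula (Fin n))))
    (α : Ordinal.{0})
    (p : ∀ S : Finset α.ToType, Set (L.Formula ↥S))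
    (hp : ∀ S : Finset α.ToType, IsCompleteTType L T ↥S (p S))
    (Tstar : (L[[α.ToType]]).Theory)
    (hext : (L.lhomWithConstants α.ToType).onTheory T ⊆ Tstar)
    (hext' : ∀ (S : Finset α.ToType) (φ : L.Formula ↥S), φ ∈ p S →
      constSentence L α.ToType φ (fun s => (s : α.ToType)) ∈ Tstar)
    (hcon : Tstar.IsSatisfiable)
    (hLsent : ∀ σ ∈ Tstar,
      (¬ ∃ (S : Finset α.ToType) (φ : L.Formula ↥S), φ ∈ p S ∧
        σ = constSentence L α.ToType φ (fun s => (s : α.ToType))) →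
      σ ∈ Set.range (L.lhomWithConstants α.ToType).onSentence)
    (hreal : ∀ S : Finset α.ToType, ∃ M : Theory.ModelType.{0,0,0} T,
      (∀ q ∈ Γ, OmitsIn L M q.2) ∧ ∃ v : ↥S → M, ∀ φ ∈ p S, φ.Realize v) :
    ∃ N : Theory.ModelType.{0,0,0} Tstar, ∀ q ∈ Γ,
      ¬ ∃ v : Fin q.1 → N, ∀ φ ∈ q.2,
        ((L.lhomWithConstants α.ToType).onFormula φ).Realize v := by
  classical
  obtain ⟨M⟩ := hcon
  let _ : L.Structure M := (L.lhomWithConstants α.ToType).reduct M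
  have hMT : M ⊨ T := (LHom.onTheory_model (L.lhomWithConstants α.ToType) T).1
    (M.is_model.mono hext)
  let c : α.ToType → M := fun i => ((L.con i : (L[[α.ToType]]).Constants) : M)
  let A : L.Substructure M := Substructure.closure L (Set.range c)
  have hA : A.IsElementary := morley_hull_elementary L T hSk M A
  let N : L.ElementarySubstructure M := ⟨A, hA⟩
  have : Nonempty N := morley_hull_nonempty L T hSk M A
  let d : α.ToType → N := fun i => ⟨c i, Substructure.subset_closure ⟨i, rfl⟩⟩
  let _ : (constantsOn α.ToType).Structure N := constantsOn.structure d
  have hd : ∀ i, ((L.con i : (L[[α.ToType]]).Constants) : N) = d i := fun i => rfl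
  have hM : ∀ (S : Finset α.ToType) (φ : L.Formula ↥S), φ ∈ p S →
      φ.Realize (fun s : S => c s) := fun S φ h =>
    (morley_realize_constSentence L α.ToType φ _).1
      (M.is_model.realize_of_mem _ (hext' S φ h))
  have hN : N ⊨ Tstar := by
    refine ⟨fun σ hσ => ?_⟩
    by_cases h : ∃ (S : Finset α.ToType) (φ : L.Formula ↥S), φ ∈ p S ∧
        σ = constSentence L α.ToType φ (fun s => (s : α.ToType))
    · obtain ⟨S, φ, hφ, rfl⟩ := h
      rw [morley_realize_constSentence]
      exact (N.subtype.map_formula φ _).1 (hM S φ hφ)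
    · obtain ⟨τ, rfl⟩ := hLsent σ hσ h
      rw [LHom.realize_onSentence]
      have : M ⊨ (L.lhomWithConstants α.ToType).onSentence τ := M.is_model.realize_of_mem _ hσ
      rw [LHom.realize_onSentence] at this
      exact (N.realize_sentence τ).2 this
  refine ⟨Theory.ModelType.of Tstar N, ?_⟩
  rintro ⟨n, q⟩ hq ⟨v, hv⟩
  change Fin n → N at v
  have hv0 : ∀ φ ∈ q, ((L.lhomWithConstants α.ToType).onFormula φ).Realize v := hv
  have hv' : ∀ φ ∈ q, φ.Realize (fun i => (v i : M)) := fun φ hφ =>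
    (N.subtype.map_formula φ v).2 ((LHom.realize_onFormula (L.lhomWithConstants α.ToType) φ).1 (hv0 φ hφ))
  choose t ht using fun i => morley_exists_term L c (v i : M) (v i).2
  let S : Finset α.ToType := Finset.univ.biUnion fun i => (t i).varFinset
  have hS : ∀ i, ∀ a ∈ (t i).varFinset, a ∈ S := fun i a ha =>
    Finset.mem_biUnion.2 ⟨i, Finset.mem_univ _, ha⟩
  let t' : Fin n → L.Term S := fun i => (t i).restrictVar fun a => ⟨a, hS i a a.2⟩
  have ht' : ∀ i, (t' i).realize (fun s : S => c s) = v i := fun i =>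
    (Term.realize_restrictVar (v := fun s : S => c s) c fun a => rfl).trans (ht i)
  obtain ⟨M', hM', w, hw⟩ := hreal S
  refine hM' ⟨n, q⟩ hq ⟨fun i => (t' i).realize w, fun φ hφ => ?_⟩
  have hmem : (φ.subst t' : L.Formula S) ∈ p S := by
    rcases (hp S).2 (φ.subst t') with h | h
    · exact h
    · exfalso
      have h1 := hM S _ h
      rw [Formula.realize_not] at h1
      refine h1 (BoundedFormula.realize_subst.2 ?_)
      simp only [ht']
      exact hv' φ hφ
  exact BoundedFormula.realize_subst.1 (hw _ hmem)
end
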